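/- arXiv:1610.00570 — 2 statements merged into one kernel-verified Lean document; each statement's English description precedes it below -/
import Mathlib

section
/- Let s ≠ t be elements of F such that the quadratic forms Q_s = Q + s·l² and Q_t = Q + t·l² both have Witt index n, let A be a relative hemisystem of the elliptic quadric defined by Q_s with respect to 𝒬, let A' be a relative hemisystem of the elliptic quadric defined by Q_t with respect to 𝒬, and set X = A ∪ A' ∪ 𝒬. Then every hyperplane of V (subspace of dimension 2n+1) contains either (q^{2n} − 1)/(q − 1) or (q^{2n} − 1)/(q − 1) − qⁿ points of X; that is, X is a two-character set with the same hyperplane intersection numbers as an elliptic quadric Q⁻(2n+1,q) (an elliptic quasi-quadric). -/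
noncomputable section

open Module

variable {F V : Type*} [Field F] [AddCommGroup V] [Module F V]

/-- `P` is a singular point of the quadratic form `Q`, i.e. a `1`-dimensional subspace
spanned by a nonzero singular vector. -/
def IsSingularPoint (Q : QuadraticForm F V) (P : Submodule F V) : Prop :=
  ∃ v : V, v ≠ 0 ∧ Q v = 0 ∧ P = Submodule.span F {v}

/-- A subspace is totally singular if `Q` vanishes identically on it. -/
def TotallySingular (Q : QuadraticForm F V) (W : Submodule F V) : Prop :=
  ∀ v ∈ W, Q v = 0

/-- A generator is a totally singular subspace of (vector space) dimension `n`. -/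
def IsGenerator (Q : QuadraticForm F V) (n : ℕ) (g : Submodule F V) : Prop :=
  TotallySingular Q g ∧ finrank F g = n

/-- The restriction of `Q` to the subspace `U` is nondegenerate. -/
def NondegOn (Q : QuadraticForm F V) (U : Submodule F V) : Prop :=
  ∀ v ∈ U, Q v = 0 → (∀ w ∈ U, QuadraticMap.polar (⇑Q) v w = 0) → v = 0

/-- The quadratic form `Q` is nondegenerate. -/
def Nondeg (Q : QuadraticForm F V) : Prop :=
  ∀ v : V, Q v = 0 → (∀ w : V, QuadraticMap.polar (⇑Q) v w = 0) → v = 0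

/-- `Q` has Witt index `n`: every totally singular subspace has dimension at most `n`
and some totally singular subspace has dimension `n`. -/
def HasWittIndex (Q : QuadraticForm F V) (n : ℕ) : Prop :=
  (∀ W : Submodule F V, TotallySingular Q W → finrank F W ≤ n) ∧
  ∃ W : Submodule F V, TotallySingular Q W ∧ finrank F W = n

/-- A relative `m`-ovoid with respect to the parabolic section cut out by the
hyperplane `H`: a set `R` of singular points not contained in `H` such that every
generator not contained in `H` contains exactly `m` points of `R`. -/
def IsRelativeMOvoid (Q : QuadraticForm F V) (n : ℕ) (H : Submodule F V) (m : ℕ)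
    (R : Set (Submodule F V)) : Prop :=
  (∀ P ∈ R, IsSingularPoint Q P ∧ ¬ P ≤ H) ∧
  ∀ g : Submodule F V, IsGenerator Q n g → ¬ g ≤ H → {P ∈ R | P ≤ g}.ncard = m

/-- A relative hemisystem of the elliptic quadric defined by `Q'` with respect to the
parabolic section cut out by `H`: a relative `(q^{n−1}/2)`-ovoid whose size equals the
number of `Q'`-singular points outside `H` not belonging to it. -/
def IsRelHemisystemOf (Q' : QuadraticForm F V) (q n : ℕ) (H : Submodule F V)
    (R : Set (Submodule F V)) : Prop :=
  IsRelativeMOvoid Q' n H (q ^ (n - 1) / 2) R ∧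
  R.ncard = {P : Submodule F V | IsSingularPoint Q' P ∧ ¬ P ≤ H ∧ P ∉ R}.ncard

section helpers

variable [Fintype F] [Fintype V]

open Classical in
/-- sum of `f` over a subspace -/
def sm (f : V → ℤ) (U : Submodule F V) : ℤ := ∑ v, if v ∈ U then f v else 0

lemma sm_one (U : Submodule F V) : sm (fun _ => 1) U = (Fintype.card F : ℤ) ^ finrank F U := by
  classical
  unfold sm
  have h := Module.natCard_eq_pow_finrank (K := F) (V := U)
  rw [Finset.sum_boole]
  rw [Nat.card_eq_fintype_card, Fintype.card_subtype, Nat.card_eq_fintype_card] at h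
  exact_mod_cast h

/-- orthogonal -/
def perp (Q : QuadraticForm F V) (U : Submodule F V) : Submodule F V :=
  LinearMap.BilinForm.orthogonal (QuadraticMap.polarBilin Q) U

omit [Fintype F] [Fintype V] in
lemma mem_perp (Q : QuadraticForm F V) (U : Submodule F V) (v : V) :
    v ∈ perp Q U ↔ ∀ u ∈ U, QuadraticMap.polar Q u v = 0 := by
  simp [perp, LinearMap.BilinForm.mem_orthogonal_iff]

open Classical in
lemma fiber_count (U : Submodule F V) (φ : V →ₗ[F] F) (h : ∃ u ∈ U, φ u ≠ 0) (c : F) :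
    (Fintype.card F : ℤ) * sm (fun u => if φ u = c then 1 else 0) U = sm (fun _ => 1) U := by
  classical
  obtain ⟨u0, hu0, hne⟩ := h
  have key : ∀ d : F, sm (fun u => if φ u = d then 1 else 0) U
      = sm (fun u => if φ u = c then 1 else 0) U := by
    intro d
    unfold sm
    refine Fintype.sum_equiv (Equiv.addRight (((c - d) / φ u0) • u0)) _ _ ?_
    intro x
    have h1 : x + ((c - d) / φ u0) • u0 ∈ U ↔ x ∈ U :=
      Submodule.add_mem_iff_left _ (U.smul_mem _ hu0)
    have h2 : φ (x + ((c - d) / φ u0) • u0) = c ↔ φ x = d := by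
      rw [map_add, map_smul, smul_eq_mul, div_mul_cancel₀ _ hne]
      constructor
      · intro h; linear_combination h
      · intro h; linear_combination h
    simp only [Equiv.coe_addRight, h1, h2]
  have : ∑ d : F, sm (fun u => if φ u = d then 1 else 0) U = sm (fun _ => 1) U := by
    unfold sm
    rw [Finset.sum_comm]
    refine Finset.sum_congr rfl fun v _ => ?_
    by_cases hv : v ∈ U <;> simp [hv]
  rw [← this, Finset.sum_congr rfl (fun d _ => key d)]
  simp

open Classical in
/-- number of singular vectors in a subspace -/
def NS (Q : QuadraticForm F V) (U : Submodule F V) : ℤ := sm (fun v => if Q v = 0 then 1 else 0) U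

omit [Fintype F] [Fintype V] in
lemma ts_le_perp {Q : QuadraticForm F V} {U : Submodule F V} (hU : TotallySingular Q U) :
    U ≤ perp Q U := by
  intro v hv
  rw [mem_perp]
  intro u hu
  simp [QuadraticMap.polar, hU _ hv, hU _ hu, hU _ (U.add_mem hu hv)]

lemma NS_top {Q : QuadraticForm F V} {U : Submodule F V} (hU : TotallySingular Q U) :
    (Fintype.card F : ℤ) * NS Q ⊤ = Fintype.card F * NS Q (perp Q U) +
      (sm (fun _ => 1) (⊤ : Submodule F V) - sm (fun _ => 1) (perp Q U)) := by
  classical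
  have h1 : ∑ v : V, ∑ u : V, (if v ∉ perp Q U ∧ u ∈ U ∧ Q (v + u) = 0 then (1:ℤ) else 0)
      = (NS Q ⊤ - NS Q (perp Q U)) * sm (fun _ => 1) U := by
    rw [Finset.sum_comm]
    unfold NS sm
    rw [← Finset.sum_sub_distrib, Finset.mul_sum]
    refine Finset.sum_congr rfl fun u _ => ?_
    by_cases hu : u ∈ U
    · rw [if_pos hu, mul_one]
      refine Fintype.sum_equiv (Equiv.addRight u) _ _ ?_
      intro v
      have : v + u ∈ perp Q U ↔ v ∈ perp Q U :=
        Submodule.add_mem_iff_left _ (ts_le_perp hU hu)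
      simp only [Equiv.coe_addRight, this]
      by_cases h1 : v ∈ perp Q U
      · simp [h1]
      · simp [h1, hu]; congr
    · simp [hu]
  have h2 : (Fintype.card F : ℤ) * ∑ v : V, ∑ u : V,
      (if v ∉ perp Q U ∧ u ∈ U ∧ Q (v + u) = 0 then (1:ℤ) else 0)
      = (sm (fun _ => 1) (⊤ : Submodule F V) - sm (fun _ => 1) (perp Q U)) * sm (fun _ => 1) U := by
    have e : (sm (fun _ => 1) (⊤ : Submodule F V) - sm (fun _ => 1) (perp Q U))
      = ∑ v : V, if v ∉ perp Q U then (1:ℤ) else 0 := by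
      unfold sm
      rw [← Finset.sum_sub_distrib]
      refine Finset.sum_congr rfl fun v _ => ?_
      by_cases h1 : v ∈ perp Q U <;> simp [h1]
    rw [e, Finset.mul_sum, Finset.sum_mul]
    refine Finset.sum_congr rfl fun v _ => ?_
    by_cases h1 : v ∈ perp Q U
    · simp [h1]
    · rw [if_pos h1, one_mul]
      have h3 : ∃ u ∈ U, QuadraticMap.polarBilin Q v u ≠ 0 := by
        rw [mem_perp] at h1
        push Not at h1
        obtain ⟨u, hu, h⟩ := h1
        refine ⟨u, hu, ?_⟩
        rwa [QuadraticMap.polarBilin_apply_apply, QuadraticMap.polar_comm]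
      rw [← fiber_count U (QuadraticMap.polarBilin Q v) h3 (- Q v)]
      congr 1
      unfold sm
      refine Finset.sum_congr rfl fun u _ => ?_
      by_cases hu : u ∈ U
      · have : Q (v + u) = 0 ↔ QuadraticMap.polarBilin Q v u = - Q v := by
          rw [QuadraticMap.map_add Q, hU u hu, QuadraticMap.polarBilin_apply_apply]
          constructor
          · intro h; linear_combination h
          · intro h; linear_combination h
        simp [h1, hu, this]
      · simp [hu]
  rw [h1] at h2
  have hpos : sm (fun _ => 1) U ≠ 0 := by
    rw [sm_one]
    have : 0 < Fintype.card F := Fintype.card_pos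
    positivity
  have := mul_right_cancel₀ hpos ((mul_assoc _ _ _).trans h2)
  linarith

omit [Fintype F] [Fintype V] in
lemma ts_sup {Q : QuadraticForm F V} {U : Submodule F V} (hU : TotallySingular Q U) {u : V}
    (hu : Q u = 0) (hup : u ∈ perp Q U) : TotallySingular Q (U ⊔ Submodule.span F {u}) := by
  intro v hv
  rw [Submodule.mem_sup] at hv
  obtain ⟨y, hy, z, hz, rfl⟩ := hv
  rw [Submodule.mem_span_singleton] at hz
  obtain ⟨c, rfl⟩ := hz
  rw [mem_perp] at hup
  rw [QuadraticMap.map_add Q, hU y hy, QuadraticMap.map_smul, hu, QuadraticMap.polar_smul_right,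
    hup y hy]
  simp

omit [Fintype F] [Fintype V] in
lemma mem_perp_sup {Q : QuadraticForm F V} {U : Submodule F V} {u x : V} :
    x ∈ perp Q (U ⊔ Submodule.span F {u}) ↔ x ∈ perp Q U ∧ QuadraticMap.polar Q u x = 0 := by
  simp only [mem_perp]
  constructor
  · intro h
    exact ⟨fun w hw => h w (Submodule.mem_sup_left hw),
      h u (Submodule.mem_sup_right (Submodule.mem_span_singleton_self u))⟩
  · rintro ⟨h1, h2⟩ v hv
    rw [Submodule.mem_sup] at hv
    obtain ⟨y, hy, z, hz, rfl⟩ := hv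
    rw [Submodule.mem_span_singleton] at hz
    obtain ⟨c, rfl⟩ := hz
    rw [QuadraticMap.polar_add_left, QuadraticMap.polar_smul_left, h1 y hy, h2]
    simp

omit [Fintype F] [Fintype V] in
lemma finrank_sup_one [Finite V] {U : Submodule F V} {u : V} (hu : u ∉ U) :
    finrank F (U ⊔ Submodule.span F {u} : Submodule F V) = finrank F U + 1 := by
  have hd : U ⊓ Submodule.span F {u} = ⊥ := by
    rw [eq_bot_iff]
    rintro x ⟨h1, h2⟩
    obtain ⟨c, rfl⟩ := Submodule.mem_span_singleton.1 h2
    by_cases hc : c = 0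
    · simp [hc]
    · exact absurd ((Submodule.smul_mem_iff _ hc).1 h1) hu
  have := Submodule.finrank_sup_add_finrank_inf_eq U (Submodule.span F {u})
  rw [hd, finrank_bot, finrank_span_singleton (by rintro rfl; exact hu U.zero_mem)] at this
  simpa using this

omit [Fintype F] [Fintype V] in
lemma exchange {U : Submodule F V} {u x : V} (hx : x ∉ U)
    (h : x ∈ U ⊔ Submodule.span F {u}) : u ∉ U ∧ u ∈ U ⊔ Submodule.span F {x} := by
  rw [Submodule.mem_sup] at h
  obtain ⟨y, hy, z, hz, rfl⟩ := h
  rw [Submodule.mem_span_singleton] at hz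
  obtain ⟨c, rfl⟩ := hz
  have hc : c ≠ 0 := by
    rintro rfl; apply hx; simpa using hy
  constructor
  · intro hu; exact hx (U.add_mem hy (U.smul_mem _ hu))
  · rw [Submodule.mem_sup]
    refine ⟨-(c⁻¹ • y), U.neg_mem (U.smul_mem _ hy), c⁻¹ • (y + c • u),
      Submodule.smul_mem _ _ (Submodule.mem_span_singleton_self _), ?_⟩
    rw [smul_add, smul_smul, inv_mul_cancel₀ hc]; simp

/-- polar form nondegenerate -/
def NDG (Q : QuadraticForm F V) : Prop := ∀ v : V, (∀ w, QuadraticMap.polar Q v w = 0) → v = 0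

omit [Fintype F] [Fintype V] in
lemma NDG.nd {Q : QuadraticForm F V} (h : NDG Q) :
    LinearMap.BilinForm.Nondegenerate (QuadraticMap.polarBilin Q) := by
  refine ⟨fun v hv => h v fun w => hv w, fun v hv => h v fun w => ?_⟩
  rw [QuadraticMap.polar_comm]; exact hv w

omit [Fintype F] in
lemma finrank_perp {Q : QuadraticForm F V} (h : NDG Q) (U : Submodule F V) :
    finrank F (perp Q U) = finrank F V - finrank F U :=
  LinearMap.BilinForm.finrank_orthogonal h.nd U

omit [Fintype F] [Fintype V] in
lemma gen_perp {Q : QuadraticForm F V} [Finite V] {n : ℕ} (hw : HasWittIndex Q n) {W : Submodule F V}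
    (hW : TotallySingular Q W) (hn : finrank F W = n) {v : V} (hv : v ∈ perp Q W) (hs : Q v = 0) :
    v ∈ W := by
  by_contra hc
  have := hw.1 _ (ts_sup hW hs hv)
  have : Fintype V := Fintype.ofFinite V
  rw [finrank_sup_one hc] at *
  omega

lemma NS_perp {Q : QuadraticForm F V} {n : ℕ} (hw : HasWittIndex Q n) (hnd : NDG Q)
    (hV : finrank F V = 2 * n + 2) {k j : ℕ} (hkj : k + j = n) {U : Submodule F V}
    (hU : TotallySingular Q U) (hk : finrank F U = k) :
    NS Q (perp Q U) = (Fintype.card F : ℤ) ^ n + (Fintype.card F : ℤ) ^ (n + 1 + j)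
      - (Fintype.card F : ℤ) ^ (n + 1) := by
  classical
  obtain ⟨W, hW, hWn⟩ := hw.2
  have hW1 : NS Q (perp Q W) = (Fintype.card F : ℤ) ^ n := by
    rw [← hWn, ← sm_one]
    unfold NS sm
    refine Finset.sum_congr rfl fun v _ => ?_
    by_cases h : v ∈ W
    · simp [h, ts_le_perp hW h, hW v h]
    · by_cases h2 : v ∈ perp Q W
      · have : Q v ≠ 0 := fun h3 => h (gen_perp hw hW hWn h2 h3)
        simp [h, this]
      · simp [h, h2]
  have e1 := NS_top hW
  have e2 := NS_top hU
  rw [sm_one, sm_one, finrank_perp hnd, hV, hWn, hW1] at e1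
  rw [sm_one, sm_one, finrank_perp hnd, hV, hk] at e2
  have hq : (0 : ℤ) < Fintype.card F := by exact_mod_cast Fintype.card_pos
  have i1 : 2 * n + 2 - n = n + 2 := by omega
  have i2 : 2 * n + 2 - k = n + 2 + j := by omega
  rw [i1] at e1
  rw [i2] at e2
  apply mul_left_cancel₀ hq.ne'
  rw [e1] at e2
  ring_nf at e2 ⊢
  linarith

end helpers

section helpers2

variable [Fintype F] [Fintype V]

lemma key_ind {Q : QuadraticForm F V} {n : ℕ} (hw : HasWittIndex Q n) (hnd : NDG Q)
    (hV : finrank F V = 2 * n + 2) (f : V → ℤ) (hf : ∀ v, Q v ≠ 0 → f v = 0)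
    (hg : ∀ U : Submodule F V, TotallySingular Q U → finrank F U = n → sm f U = 0) (j : ℕ) :
    ∀ k, k + j = n → ∀ U : Submodule F V, TotallySingular Q U → finrank F U = k →
      sm f (perp Q U) = - (Fintype.card F : ℤ) ^ (j + 1) * sm f U := by
  classical
  induction j with
  | zero =>
    intro k hk U hU hUk
    have h0 := hg U hU (by omega)
    rw [h0, mul_zero, ← h0]
    unfold sm
    refine Finset.sum_congr rfl fun v _ => ?_
    by_cases h : v ∈ U
    · simp [h, ts_le_perp hU h]
    · by_cases h2 : v ∈ perp Q U
      · have : Q v ≠ 0 := fun h3 => h (gen_perp hw hU (by omega) h2 h3)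
        simp [h, hf v this]
      · simp [h, h2]
  | succ j ih =>
    intro k hk U hU hUk
    have hq : (1 : ℤ) < Fintype.card F := by exact_mod_cast Fintype.one_lt_card
    set q : ℤ := (Fintype.card F : ℤ) with hqdef
    set a := NS Q (perp Q U) with ha
    have ha' : a = q ^ n + q ^ (n + 1 + (j + 1)) - q ^ (n + 1) := NS_perp hw hnd hV hk hU hUk
    set b : ℤ := q ^ n + q ^ (n + 1 + j) - q ^ (n + 1) with hb
    have hle := ts_le_perp hU
    have hUc : sm (fun _ => 1) U = q ^ k := by rw [sm_one, hUk]
    set C : V → Prop := fun u => Q u = 0 ∧ u ∈ perp Q U ∧ u ∉ U with hC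
    have hCc : ∑ u : V, (if C u then (1:ℤ) else 0) = a - q ^ k := by
      rw [← hUc, ha]
      unfold NS sm
      rw [← Finset.sum_sub_distrib]
      refine Finset.sum_congr rfl fun u _ => ?_
      by_cases h1 : u ∈ U
      · simp [hC, h1, hle h1, hU u h1]
      · by_cases h2 : u ∈ perp Q U <;> by_cases h3 : Q u = 0 <;> simp [hC, h1, h2, h3]
    have e1 : ∑ u : V, (if C u then sm f (perp Q (U ⊔ Submodule.span F {u})) else 0)
        = (a - q ^ k) * sm f U + (b - q ^ k) * (sm f (perp Q U) - sm f U) := by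
      have : ∑ u : V, (if C u then sm f (perp Q (U ⊔ Submodule.span F {u})) else 0)
          = ∑ x : V, ∑ u : V,
            f x * (if C u ∧ x ∈ perp Q (U ⊔ Submodule.span F {u}) then 1 else 0) := by
        rw [Finset.sum_comm]
        refine Finset.sum_congr rfl fun u _ => ?_
        by_cases h : C u
        · rw [if_pos h]
          unfold sm
          refine Finset.sum_congr rfl fun x _ => ?_
          by_cases h1 : x ∈ perp Q (U ⊔ Submodule.span F {u}) <;> simp [h, h1]
        · simp [h]
      rw [this]
      unfold sm
      rw [← Finset.sum_sub_distrib, Finset.mul_sum, Finset.mul_sum, ← Finset.sum_add_distrib]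
      refine Finset.sum_congr rfl fun x _ => ?_
      rw [← Finset.mul_sum]
      by_cases hx : x ∈ U
      · rw [if_pos hx, if_pos (hle hx), sub_self, mul_zero, add_zero, mul_comm, ← hCc]
        congr 1
        refine Finset.sum_congr rfl fun u _ => ?_
        by_cases h : C u
        · have : x ∈ perp Q (U ⊔ Submodule.span F {u}) := by
            rw [mem_perp_sup]
            refine ⟨hle hx, ?_⟩
            rw [QuadraticMap.polar_comm]
            exact (mem_perp _ _ _).1 h.2.1 x hx
          simp [h, this]
        · simp [h]
      · by_cases hxs : Q x = 0
        · by_cases hxp : x ∈ perp Q U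
          · rw [if_neg hx, if_pos hxp, mul_zero, zero_add, sub_zero, mul_comm]
            congr 1
            have := NS_perp hw hnd hV (k := k + 1) (j := j) (by omega) (ts_sup hU hxs hxp)
              (by rw [finrank_sup_one hx, hUk])
            rw [hb, ← this, ← hUc]
            unfold NS sm
            rw [← Finset.sum_sub_distrib]
            refine Finset.sum_congr rfl fun u _ => ?_
            simp only [mem_perp_sup]
            rw [QuadraticMap.polar_comm Q u x]
            by_cases h1 : u ∈ U
            · have h4 : QuadraticMap.polar Q x u = 0 := by
                rw [QuadraticMap.polar_comm]
                exact (mem_perp _ _ _).1 hxp u h1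
              simp [hC, h1, hle h1, hU u h1, h4]
            · by_cases h2 : u ∈ perp Q U <;> by_cases h3 : Q u = 0 <;>
                simp [hC, h1, h2, h3, hxp]
          · rw [if_neg hx, if_neg hxp]
            have : ∀ u, ¬ (C u ∧ x ∈ perp Q (U ⊔ Submodule.span F {u})) := by
              rintro u ⟨-, h⟩
              exact hxp (mem_perp_sup.1 h).1
            simp [this]
        · simp [hf x hxs]
    have e2 : ∑ u : V, (if C u then sm f (U ⊔ Submodule.span F {u}) else 0)
        = (a - q ^ k) * sm f U + (q ^ (k + 1) - q ^ k) * (sm f (perp Q U) - sm f U) := by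
      have : ∑ u : V, (if C u then sm f (U ⊔ Submodule.span F {u}) else 0)
          = ∑ x : V, ∑ u : V,
            f x * (if C u ∧ x ∈ (U ⊔ Submodule.span F {u}) then 1 else 0) := by
        rw [Finset.sum_comm]
        refine Finset.sum_congr rfl fun u _ => ?_
        by_cases h : C u
        · rw [if_pos h]
          unfold sm
          refine Finset.sum_congr rfl fun x _ => ?_
          by_cases h1 : x ∈ (U ⊔ Submodule.span F {u}) <;> simp [h, h1]
        · simp [h]
      rw [this]
      unfold sm
      rw [← Finset.sum_sub_distrib, Finset.mul_sum, Finset.mul_sum, ← Finset.sum_add_distrib]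
      refine Finset.sum_congr rfl fun x _ => ?_
      rw [← Finset.mul_sum]
      by_cases hx : x ∈ U
      · rw [if_pos hx, if_pos (hle hx), sub_self, mul_zero, add_zero, mul_comm, ← hCc]
        congr 1
        refine Finset.sum_congr rfl fun u _ => ?_
        have : x ∈ (U ⊔ Submodule.span F {u}) := Submodule.mem_sup_left hx
        simp [this]
      · by_cases hxs : Q x = 0
        · by_cases hxp : x ∈ perp Q U
          · rw [if_neg hx, if_pos hxp, mul_zero, zero_add, sub_zero, mul_comm]
            congr 1
            have h5 : finrank F (U ⊔ Submodule.span F {x} : Submodule F V) = k + 1 := by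
              rw [finrank_sup_one hx, hUk]
            rw [← h5, ← sm_one, ← hUc]
            unfold sm
            rw [← Finset.sum_sub_distrib]
            refine Finset.sum_congr rfl fun u _ => ?_
            by_cases h1 : u ∈ U
            · have : u ∈ (U ⊔ Submodule.span F {x}) := Submodule.mem_sup_left h1
              simp [hC, h1, this]
            · have h6 : (C u ∧ x ∈ (U ⊔ Submodule.span F {u})) ↔
                  u ∈ (U ⊔ Submodule.span F {x}) := by
                constructor
                · rintro ⟨-, h⟩
                  exact (exchange hx h).2
                · intro h
                  have ht := ts_sup hU hxs hxp
                  refine ⟨⟨ht u h, ?_, h1⟩, (exchange h1 h).2⟩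
                  have := ts_le_perp ht h
                  exact (mem_perp_sup.1 this).1
              simp [h6, h1]
          · rw [if_neg hx, if_neg hxp]
            have : ∀ u, ¬ (C u ∧ x ∈ (U ⊔ Submodule.span F {u})) := by
              rintro u ⟨hc, h⟩
              have ht := ts_sup hU hc.1 hc.2.1
              have := ts_le_perp ht h
              exact hxp (mem_perp_sup.1 this).1
            simp [this]
        · simp [hf x hxs]
    have e3 : ∑ u : V, (if C u then sm f (perp Q (U ⊔ Submodule.span F {u})) else 0)
        = - q ^ (j + 1) * ∑ u : V, (if C u then sm f (U ⊔ Submodule.span F {u}) else 0) := by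
      rw [Finset.mul_sum]
      refine Finset.sum_congr rfl fun u _ => ?_
      by_cases h : C u
      · rw [if_pos h, if_pos h]
        exact ih (k + 1) (by omega) _ (ts_sup hU h.1 h.2.1) (by rw [finrank_sup_one h.2.2, hUk])
      · simp [h]
    rw [e1, e2] at e3
    have hne : (q ^ (j + 1) + 1) * (q ^ n - q ^ k) ≠ 0 := by
      apply mul_ne_zero
      · positivity
      · have : q ^ k < q ^ n := pow_lt_pow_right₀ hq (by omega)
        linarith
    apply mul_left_cancel₀ hne
    have hn' : n = k + (j + 1) := hk.symm
    rw [ha', hb, hn'] at e3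
    rw [hn']
    generalize sm f (perp Q U) = T at *
    generalize sm f U = P at *
    linear_combination e3

lemma sm_span (f : V → ℤ) (h0 : f 0 = 0) (hs : ∀ (c : F) v, c ≠ 0 → f (c • v) = f v) (v : V) :
    sm f (Submodule.span F {v}) = (Fintype.card F - 1) * f v := by
  classical
  by_cases hv : v = 0
  · subst hv
    rw [h0, mul_zero]
    unfold sm
    refine Finset.sum_eq_zero fun w _ => ?_
    split_ifs with h
    · simp at h; rw [h, h0]
    · rfl
  have h1 : sm f (Submodule.span F {v}) =
      f v * sm (fun _ => 1) (Submodule.span F {v}) - f v := by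
    unfold sm
    rw [Finset.mul_sum]
    have : f v = ∑ w : V, if w = 0 then f v else 0 := by simp
    conv_rhs => rw [this]
    rw [← Finset.sum_sub_distrib]
    refine Finset.sum_congr rfl fun w _ => ?_
    by_cases hw : w = 0
    · simp [hw, h0]
    · by_cases hm : w ∈ Submodule.span F {v}
      · rw [if_pos hm, if_pos hm, if_neg hw]
        obtain ⟨c, rfl⟩ := Submodule.mem_span_singleton.1 hm
        rw [hs c v (by rintro rfl; simp at hw)]
        simp
      · simp [hm, hw]
  rw [h1, sm_one, finrank_span_singleton hv]
  ring

lemma parseval {Q : QuadraticForm F V} {n : ℕ} (hnd : NDG Q)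
    (hV : finrank F V = 2 * n + 2) (f : V → ℤ) (h0 : f 0 = 0)
    (hs : ∀ (c : F) v, c ≠ 0 → f (c • v) = f v) (htot : ∑ v, f v = 0)
    (hT : ∀ p, f p ≠ 0 → sm f (perp Q (Submodule.span F {p})) =
      - (Fintype.card F : ℤ) ^ n * (Fintype.card F - 1) * f p) (p : V) :
    sm f (perp Q (Submodule.span F {p})) =
      - (Fintype.card F : ℤ) ^ n * (Fintype.card F - 1) * f p := by
  classical
  set q : ℤ := (Fintype.card F : ℤ) with hqdef
  have hmem : ∀ p v : V, v ∈ perp Q (Submodule.span F {p}) ↔ QuadraticMap.polar Q p v = 0 := by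
    intro p v
    have := mem_perp_sup (Q := Q) (U := ⊥) (u := p) (x := v)
    rw [bot_sup_eq] at this
    rw [this]
    simp [mem_perp]
  have hcount : ∀ v w : V, v ≠ 0 → ∑ p : V,
      (if QuadraticMap.polar Q p v = 0 ∧ QuadraticMap.polar Q p w = 0 then (1:ℤ) else 0)
      = q ^ (2 * n) + if w ∈ Submodule.span F {v} then q ^ (2 * n + 1) - q ^ (2 * n) else 0 := by
    intro v w hv
    have e : ∑ p : V,
      (if QuadraticMap.polar Q p v = 0 ∧ QuadraticMap.polar Q p w = 0 then (1:ℤ) else 0)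
      = sm (fun _ => 1) (perp Q (Submodule.span F {v} ⊔ Submodule.span F {w})) := by
      unfold sm
      refine Finset.sum_congr rfl fun p _ => ?_
      simp only [mem_perp_sup, hmem, QuadraticMap.polar_comm Q p]
    rw [e, sm_one, finrank_perp hnd, hV]
    by_cases hw : w ∈ Submodule.span F {v}
    · have : Submodule.span F {v} ⊔ Submodule.span F {w} = Submodule.span F {v} := by
        rw [sup_eq_left, Submodule.span_singleton_le_iff_mem]; exact hw
      rw [this, finrank_span_singleton hv, if_pos hw]
      have : 2 * n + 2 - 1 = 2 * n + 1 := by omega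
      rw [this]; ring
    · rw [finrank_sup_one hw, finrank_span_singleton hv, if_neg hw]
      have : 2 * n + 2 - (1 + 1) = 2 * n := by omega
      rw [this]; ring
  have hsq : ∑ p : V, (sm f (perp Q (Submodule.span F {p}))) ^ 2
      = ∑ p : V, (q ^ n * (q - 1) * f p) ^ 2 := by
    have e1 : ∑ p : V, (sm f (perp Q (Submodule.span F {p}))) ^ 2
      = ∑ v : V, ∑ w : V, f v * f w * ∑ p : V,
      (if QuadraticMap.polar Q p v = 0 ∧ QuadraticMap.polar Q p w = 0 then (1:ℤ) else 0) := by
      simp only [Finset.mul_sum]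
      rw [Finset.sum_congr rfl (fun v _ => Finset.sum_comm), Finset.sum_comm]
      refine Finset.sum_congr rfl fun p _ => ?_
      unfold sm
      rw [sq, Finset.sum_mul_sum]
      refine Finset.sum_congr rfl fun v _ => ?_
      refine Finset.sum_congr rfl fun w _ => ?_
      simp only [hmem]
      by_cases h1 : QuadraticMap.polar Q p v = 0 <;>
        by_cases h2 : QuadraticMap.polar Q p w = 0 <;> simp [h1, h2]
    rw [e1]
    refine Finset.sum_congr rfl fun v _ => ?_
    by_cases hv : f v = 0
    · simp [hv]
    have hv0 : v ≠ 0 := by rintro rfl; exact hv h0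
    have e2 : ∑ w : V, f v * f w * ∑ p : V,
      (if QuadraticMap.polar Q p v = 0 ∧ QuadraticMap.polar Q p w = 0 then (1:ℤ) else 0)
      = f v * q ^ (2 * n) * ∑ w : V, f w +
        f v * (q ^ (2 * n + 1) - q ^ (2 * n)) * sm f (Submodule.span F {v}) := by
      unfold sm
      rw [Finset.mul_sum, Finset.mul_sum, ← Finset.sum_add_distrib]
      refine Finset.sum_congr rfl fun w _ => ?_
      rw [hcount v w hv0]
      split_ifs <;> ring
    rw [e2, htot, sm_span f h0 hs]
    ring
  have hnn : ∀ p ∈ Finset.univ, 0 ≤ (sm f (perp Q (Submodule.span F {p}))) ^ 2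
      - (q ^ n * (q - 1) * f p) ^ 2 := by
    intro p _
    by_cases hp : f p = 0
    · rw [hp]; simp; positivity
    · rw [hT p hp]; apply le_of_eq; ring
  have hz := (Finset.sum_eq_zero_iff_of_nonneg hnn).1
    (by rw [Finset.sum_sub_distrib, hsq, sub_self]) p (Finset.mem_univ p)
  by_cases hp : f p = 0
  · rw [hp] at hz ⊢
    simpa using hz
  · exact hT p hp

lemma T_formula {Q : QuadraticForm F V} {n : ℕ} (hn : 2 ≤ n) (hw : HasWittIndex Q n) (hnd : NDG Q)
    (hV : finrank F V = 2 * n + 2) (f : V → ℤ) (hf : ∀ v, Q v ≠ 0 → f v = 0) (h0 : f 0 = 0)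
    (hs : ∀ (c : F) v, c ≠ 0 → f (c • v) = f v)
    (hg : ∀ U : Submodule F V, TotallySingular Q U → finrank F U = n → sm f U = 0) (p : V) :
    sm f (perp Q (Submodule.span F {p})) =
      - (Fintype.card F : ℤ) ^ n * (Fintype.card F - 1) * f p := by
  classical
  apply parseval hnd hV f h0 hs
  · have := key_ind hw hnd hV f hf hg n 0 (by omega) ⊥ (by intro v hv; simp at hv; simp [hv])
      (by simp)
    have e1 : sm f (⊥ : Submodule F V) = 0 := by simp [sm, h0]
    have e2 : sm f (perp Q (⊥ : Submodule F V)) = ∑ v, f v := by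
      simp [sm, mem_perp]
    rw [e1, e2] at this
    simpa using this
  · intro p hp
    have hp0 : p ≠ 0 := by rintro rfl; exact hp h0
    have hps : Q p = 0 := by by_contra h; exact hp (hf p h)
    have := key_ind hw hnd hV f hf hg (n - 1) 1 (by omega) (Submodule.span F {p}) (by
      intro v hv
      obtain ⟨c, rfl⟩ := Submodule.mem_span_singleton.1 hv
      simp [QuadraticMap.map_smul, hps]) (finrank_span_singleton hp0)
    rw [this, sm_span f h0 hs]
    have : n - 1 + 1 = n := by omega
    rw [this]; ring

omit [Fintype F] [Fintype V] in
lemma mem_perp_span {Q : QuadraticForm F V} (p v : V) :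
    v ∈ perp Q (Submodule.span F {p}) ↔ QuadraticMap.polar Q p v = 0 := by
  have := mem_perp_sup (Q := Q) (U := ⊥) (u := p) (x := v)
  rw [bot_sup_eq] at this
  rw [this]
  simp [mem_perp]

lemma NS_nonsing {Q : QuadraticForm F V} {n : ℕ} (h2 : (2 : F) = 0) (hnd : NDG Q)
    (hV : finrank F V = 2 * n + 2) {p : V} (hp : Q p ≠ 0)
    (hsq : ∀ a : F, IsSquare a) :
    NS Q (perp Q (Submodule.span F {p})) = (Fintype.card F : ℤ) ^ (2 * n) := by
  classical
  have hp0 : p ≠ 0 := by rintro rfl; simp at hp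
  have hq : (0 : ℤ) < Fintype.card F := by exact_mod_cast Fintype.card_pos
  have hpp : p ∈ perp Q (Submodule.span F {p}) := by
    rw [mem_perp_span, QuadraticMap.polar_self, two_smul, ← two_mul, h2, zero_mul]
  apply mul_left_cancel₀ hq.ne'
  have e1 : ∑ c : F, ∑ v : V, (if v ∈ perp Q (Submodule.span F {p}) ∧ Q (v + c • p) = 0
      then (1:ℤ) else 0) = Fintype.card F * NS Q (perp Q (Submodule.span F {p})) := by
    have : ∀ c : F, ∑ v : V, (if v ∈ perp Q (Submodule.span F {p}) ∧ Q (v + c • p) = 0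
      then (1:ℤ) else 0) = NS Q (perp Q (Submodule.span F {p})) := by
      intro c
      unfold NS sm
      refine Fintype.sum_equiv (Equiv.addRight (c • p)) _ _ ?_
      intro v
      have : v + c • p ∈ perp Q (Submodule.span F {p}) ↔ v ∈ perp Q (Submodule.span F {p}) :=
        Submodule.add_mem_iff_left _ (Submodule.smul_mem _ _ hpp)
      simp only [Equiv.coe_addRight, this]
      by_cases h1 : v ∈ perp Q (Submodule.span F {p})
      · simp only [h1, true_and, if_true]
        congr
      · simp [h1]
    simp [this]
  have e2 : ∑ v : V, ∑ c : F, (if v ∈ perp Q (Submodule.span F {p}) ∧ Q (v + c • p) = 0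
      then (1:ℤ) else 0) = sm (fun _ => 1) (perp Q (Submodule.span F {p})) := by
    unfold sm
    refine Finset.sum_congr rfl fun v _ => ?_
    by_cases h1 : v ∈ perp Q (Submodule.span F {p})
    · obtain ⟨r, hr⟩ := hsq (- Q v / Q p)
      have hr' : Q v + r * r * Q p = 0 := by
        rw [← hr]; field_simp; ring
      have : ∀ c : F, Q (v + c • p) = 0 ↔ c = r := by
        intro c
        rw [mem_perp_span, QuadraticMap.polar_comm] at h1
        rw [QuadraticMap.map_add Q, QuadraticMap.polar_smul_right, h1, QuadraticMap.map_smul]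
        simp only [smul_eq_mul, mul_zero, add_zero]
        constructor
        · intro h
          have : (c - r) * (c - r) * Q p = 0 := by
            linear_combination h + hr' - (Q v + c * r * Q p) * h2
          have := (mul_eq_zero.1 this).resolve_right hp
          have := mul_self_eq_zero.1 this
          exact sub_eq_zero.1 this
        · rintro rfl; exact hr'
      simp [h1, this]
    · simp [h1]
  rw [← e1, Finset.sum_comm, e2, sm_one, finrank_perp hnd, finrank_span_singleton hp0, hV]
  have : 2 * n + 2 - 1 = 2 * n + 1 := by omega
  rw [this]; ring

omit [Fintype F] in
lemma ndg_of_nondeg {Q : QuadraticForm F V} {n : ℕ} (hnd : Nondeg Q)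
    (hw : HasWittIndex Q n) (hV : finrank F V = 2 * n + 2) (hsq : ∀ a : F, IsSquare a) : NDG Q := by
  intro r hr
  by_contra hr0
  have hQr : Q r ≠ 0 := fun h => hr0 (hnd r h hr)
  obtain ⟨W, hW, hWn⟩ := hw.2
  have hdim : n + 2 ≤ finrank F (perp Q W) := by
    let φ : V →ₗ[F] (Module.Dual F W) :=
      (LinearMap.lcomp F F W.subtype).comp (QuadraticMap.polarBilin Q)
    have hk : LinearMap.ker φ = perp Q W := by
      ext v
      rw [LinearMap.mem_ker, mem_perp]
      constructor
      · intro h u hu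
        have := LinearMap.congr_fun h ⟨u, hu⟩
        rw [QuadraticMap.polar_comm]
        simpa [φ] using this
      · intro h
        ext ⟨u, hu⟩
        have := h u hu
        rw [QuadraticMap.polar_comm] at this
        simpa [φ] using this
    have h1 := LinearMap.finrank_range_add_finrank_ker φ
    have h3 := Submodule.finrank_le (LinearMap.range φ)
    rw [Subspace.dual_finrank_eq, hWn] at h3
    rw [hk] at h1
    omega
  have hrW : r ∉ W := fun h => hQr (hW r h)
  have hlt : ∃ v ∈ perp Q W, v ∉ W ⊔ Submodule.span F {r} := by
    by_contra hc
    push Not at hc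
    have h4 : finrank F (perp Q W) ≤ _ := Submodule.finrank_mono (show perp Q W ≤ _ from hc)
    rw [finrank_sup_one hrW] at h4
    omega
  obtain ⟨v, hv, hvn⟩ := hlt
  obtain ⟨c, hc⟩ := hsq (- Q v / Q r)
  have hc' : Q v + c * c * Q r = 0 := by
    rw [← hc]; field_simp; ring
  have hrp : r ∈ perp Q W := by
    rw [mem_perp]; intro u _; rw [QuadraticMap.polar_comm]; exact hr u
  have hm := gen_perp hw hW hWn (v := v + c • r)
    (Submodule.add_mem _ hv (Submodule.smul_mem _ _ hrp)) (by
      rw [QuadraticMap.map_add Q, QuadraticMap.polar_smul_right, QuadraticMap.polar_comm, hr,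
        QuadraticMap.map_smul]
      simpa using hc')
  apply hvn
  have : v = (v + c • r) + (-c) • r := by simp
  rw [this]
  exact Submodule.add_mem_sup hm (Submodule.smul_mem _ _ (Submodule.mem_span_singleton_self _))

end helpers2

section helpers3

variable [Fintype F] [Fintype V]

open Classical in
lemma points_count (Y : Set (Submodule F V))
    (hY : ∀ P ∈ Y, ∃ v : V, v ≠ 0 ∧ P = Submodule.span F {v}) :
    ∑ v : V, (if v ≠ 0 ∧ Submodule.span F {v} ∈ Y then (1:ℤ) else 0)
      = (Fintype.card F - 1) * (Y.ncard : ℤ) := by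
  have : Finite (Submodule F V) := inferInstance
  have : Fintype (Submodule F V) := Fintype.ofFinite _
  rw [Set.ncard_eq_toFinset_card' Y]
  have e : ∀ v : V, (if v ≠ 0 ∧ Submodule.span F {v} ∈ Y then (1:ℤ) else 0)
      = ∑ P ∈ Y.toFinset, if v ≠ 0 ∧ Submodule.span F {v} = P then (1:ℤ) else 0 := by
    intro v
    by_cases hv : v = 0
    · simp [hv]
    · simp [hv]
  rw [Finset.sum_congr rfl (fun v _ => e v), Finset.sum_comm]
  rw [Finset.sum_congr rfl (g := fun _ => (Fintype.card F : ℤ) - 1), Finset.sum_const]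
  · simp; ring
  intro P hP
  obtain ⟨u, hu, rfl⟩ := hY P (by simpa using hP)
  have h1 : sm (fun _ => 1) (Submodule.span F {u}) = (Fintype.card F : ℤ) := by
    rw [sm_one, finrank_span_singleton hu, pow_one]
  have h2 : (1:ℤ) = ∑ v : V, if v = 0 then 1 else 0 := by simp
  rw [← h1]
  conv_rhs => rw [h2]
  unfold sm
  rw [← Finset.sum_sub_distrib]
  refine Finset.sum_congr rfl fun v _ => ?_
  by_cases hv : v = 0
  · simp [hv]
  · have : Submodule.span F {v} = Submodule.span F {u} ↔ v ∈ Submodule.span F {u} := by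
      constructor
      · intro h; rw [← h]; exact Submodule.mem_span_singleton_self v
      · intro h
        apply Submodule.eq_of_le_of_finrank_eq
        · rwa [Submodule.span_singleton_le_iff_mem]
        · rw [finrank_span_singleton hu, finrank_span_singleton hv]
    simp [hv, this]

open Classical in
/-- signed indicator function of a relative hemisystem -/
def sgn (Q : QuadraticForm F V) (l : V →ₗ[F] F) (A : Set (Submodule F V)) (v : V) : ℤ :=
  if Q v = 0 ∧ l v ≠ 0 then (if Submodule.span F {v} ∈ A then 1 else -1) else 0

omit [Fintype F] [Fintype V] in
lemma sing_of_mem {Q : QuadraticForm F V} {l : V →ₗ[F] F} {A : Set (Submodule F V)}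
    (hA : ∀ P ∈ A, IsSingularPoint Q P ∧ ¬ P ≤ LinearMap.ker l) {v : V}
    (hv : Submodule.span F {v} ∈ A) : Q v = 0 ∧ l v ≠ 0 := by
  obtain ⟨⟨u, hu, hq, he⟩, hl⟩ := hA _ hv
  constructor
  · have : v ∈ Submodule.span F {u} := by rw [← he]; exact Submodule.mem_span_singleton_self v
    obtain ⟨c, rfl⟩ := Submodule.mem_span_singleton.1 this
    simp [QuadraticMap.map_smul, hq]
  · rwa [Submodule.span_singleton_le_iff_mem, LinearMap.mem_ker] at hl

lemma sgn_gen {Q : QuadraticForm F V} {n : ℕ} (hn : 2 ≤ n) (hq2 : Even (Fintype.card F))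
    (l : V →ₗ[F] F) (A : Set (Submodule F V))
    (hA : IsRelHemisystemOf Q (Fintype.card F) n (LinearMap.ker l) A)
    (U : Submodule F V) (hU : TotallySingular Q U) (hUn : finrank F U = n) :
    sm (sgn Q l A) U = 0 := by
  classical
  obtain ⟨⟨hA1, hA2⟩, -⟩ := hA
  by_cases hUl : U ≤ LinearMap.ker l
  · unfold sm
    refine Finset.sum_eq_zero fun v _ => ?_
    by_cases hv : v ∈ U
    · have := hUl hv
      rw [LinearMap.mem_ker] at this
      simp [sgn, this]
    · simp [hv]
  · have h1 := hA2 U ⟨hU, hUn⟩ hUl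
    obtain ⟨Y, hY⟩ : ∃ Y : Set (Submodule F V), Y = {P ∈ A | P ≤ U} := ⟨_, rfl⟩
    have h2 := points_count Y (by
      rw [hY]
      rintro P ⟨hP, -⟩
      obtain ⟨⟨v, hv, -, h⟩, -⟩ := hA1 P hP
      exact ⟨v, hv, h⟩)
    rw [← hY] at h1
    rw [h1] at h2
    have h3 := fiber_count U l (by
      by_contra hc
      push Not at hc
      exact hUl hc) 0
    rw [sm_one, hUn] at h3
    set q : ℤ := (Fintype.card F : ℤ) with hqdef
    have hq0 : 0 < q := by rw [hqdef]; exact_mod_cast Fintype.card_pos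
    have h4 : (2:ℤ) * ((Fintype.card F ^ (n - 1) / 2 : ℕ) : ℤ) = q ^ (n - 1) := by
      have : 2 ∣ Fintype.card F ^ (n - 1) := by
        apply dvd_pow hq2.two_dvd; omega
      have := Nat.mul_div_cancel' this
      rw [hqdef]
      exact_mod_cast this
    have h5 : sm (fun u => if l u = 0 then (1:ℤ) else 0) U = q ^ (n - 1) := by
      apply mul_left_cancel₀ hq0.ne'
      rw [h3, ← pow_succ']
      congr 1; omega
    have h6 : sm (sgn Q l A) U = 2 * ∑ v : V, (if v ≠ 0 ∧ Submodule.span F {v} ∈ Y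
        then (1:ℤ) else 0) - (sm (fun _ => 1) U - sm (fun u => if l u = 0 then (1:ℤ) else 0) U) := by
      unfold sm
      rw [Finset.mul_sum, ← Finset.sum_sub_distrib, ← Finset.sum_sub_distrib]
      refine Finset.sum_congr rfl fun v _ => ?_
      have hm : Submodule.span F {v} ∈ Y ↔ Submodule.span F {v} ∈ A ∧ v ∈ U := by
        rw [hY, Set.mem_ofPred_eq, Submodule.span_singleton_le_iff_mem]
      simp only [hm]
      by_cases hv : v ∈ U
      · by_cases hlv : l v = 0
        · have : Submodule.span F {v} ∉ A := fun h => (sing_of_mem hA1 h).2 hlv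
          simp [sgn, hv, hlv, this]
        · have : v ≠ 0 := by rintro rfl; simp at hlv
          by_cases h : Submodule.span F {v} ∈ A <;> simp [sgn, hv, hlv, this, hU v hv, h]
      · simp [hv]
    rw [h6, h2, h5, sm_one, hUn]
    have : q ^ n = q * q ^ (n - 1) := by
      rw [← pow_succ']; congr 1; omega
    rw [← hqdef, this]
    linear_combination (q - 1) * h4

open Classical in
lemma hemi_count {Q : QuadraticForm F V} {n : ℕ} (hn : 2 ≤ n) (hq2 : Even (Fintype.card F))
    (h2 : (2 : F) = 0) (hsq : ∀ a : F, IsSquare a) (hw : HasWittIndex Q n) (hnd : NDG Q)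
    (hV : finrank F V = 2 * n + 2) (l : V →ₗ[F] F) (A : Set (Submodule F V))
    (hA : IsRelHemisystemOf Q (Fintype.card F) n (LinearMap.ker l) A) {p : V} (hp0 : p ≠ 0)
    (N q : ℤ) (hq : q = Fintype.card F)
    (hN : N = 2 * sm (fun v => if Submodule.span F {v} ∈ A then 1 else 0)
        (perp Q (Submodule.span F {p})) +
      sm (fun v => if Q v = 0 ∧ l v = 0 then 1 else 0) (perp Q (Submodule.span F {p}))) :
    (Q p ≠ 0 → N = q ^ (2 * n)) ∧
    (Q p = 0 → l p = 0 → N = q ^ (2 * n) - (q - 1) * q ^ n) ∧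
    (Q p = 0 → l p ≠ 0 → N = q ^ (2 * n) ∨ N = q ^ (2 * n) - 2 * ((q - 1) * q ^ n)) := by
  have hA1 := hA.1.1
  have hT := T_formula hn hw hnd hV (sgn Q l A)
    (by intro v hv; simp [sgn, hv]) (by simp [sgn])
    (by
      intro c v hc
      have : Submodule.span F {c • v} = Submodule.span F {v} :=
        Submodule.span_singleton_smul_eq (IsUnit.mk0 c hc) v
      simp only [sgn, this, QuadraticMap.map_smul, map_smul, smul_eq_mul, mul_eq_zero, hc,
        or_self, false_or, ne_eq])
    (sgn_gen hn hq2 l A hA) p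
  have hsum : N = NS Q (perp Q (Submodule.span F {p})) +
      sm (sgn Q l A) (perp Q (Submodule.span F {p})) := by
    rw [hN]
    unfold NS sm
    rw [Finset.mul_sum, ← Finset.sum_add_distrib, ← Finset.sum_add_distrib]
    refine Finset.sum_congr rfl fun v _ => ?_
    by_cases hv : v ∈ perp Q (Submodule.span F {p})
    · by_cases h : Submodule.span F {v} ∈ A
      · obtain ⟨h1, h3⟩ := sing_of_mem hA1 h
        simp [sgn, h, h1, h3, hv]
      · by_cases h1 : Q v = 0 <;> by_cases h3 : l v = 0 <;> simp [sgn, h, h1, h3, hv]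
    · simp [hv]
  rw [hT, ← hq] at hsum
  refine ⟨fun h => ?_, fun h h' => ?_, fun h h' => ?_⟩
  · rw [hsum, NS_nonsing h2 hnd hV h hsq, ← hq]
    simp [sgn, h]
  all_goals
    have hns := NS_perp hw hnd hV (k := 1) (j := n - 1) (by omega) (U := Submodule.span F {p}) (by
      intro v hv
      obtain ⟨c, rfl⟩ := Submodule.mem_span_singleton.1 hv
      simp [QuadraticMap.map_smul, h]) (finrank_span_singleton hp0)
    have e : n + 1 + (n - 1) = 2 * n := by omega
    rw [← hq, e] at hns
    rw [hns] at hsum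
  · rw [hsum]; simp [sgn, h']; ring
  · by_cases hpA : Submodule.span F {p} ∈ A
    · right; rw [hsum]; simp [sgn, h, h', hpA]; ring
    · left; rw [hsum]; simp [sgn, h, h', hpA]; ring

end helpers3

/-- The set `X = A ∪ A' ∪ 𝒬` obtained by gluing relative hemisystems of two elliptic
quadrics of the pencil through `𝒬` is a two-character set with the same hyperplane
intersection numbers as an elliptic quadric `Q⁻(2n+1,q)` (an elliptic quasi-quadric):
every hyperplane meets it in `(q^{2n} − 1)/(q − 1)` or `(q^{2n} − 1)/(q − 1) − qⁿ`
points. -/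
theorem statement_15
    (q n : ℕ) [Fintype F] (hq : Fintype.card F = q) (hq2 : Even q) (hn : 2 ≤ n)
    (hV : finrank F V = 2 * n + 2)
    (Q : QuadraticForm F V) (hQnd : Nondeg Q) (hQw : HasWittIndex Q n)
    (l : V →ₗ[F] F) (hl : l ≠ 0) (hHnd : NondegOn Q (LinearMap.ker l))
    (s t : F) (hst : s ≠ t)
    (hWs : HasWittIndex (Q + s • QuadraticMap.linMulLin l l) n)
    (hWt : HasWittIndex (Q + t • QuadraticMap.linMulLin l l) n)
    (A Aa : Set (Submodule F V))
    (hA : IsRelHemisystemOf (Q + s • QuadraticMap.linMulLin l l) q n (LinearMap.ker l) A)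
    (hAa : IsRelHemisystemOf (Q + t • QuadraticMap.linMulLin l l) q n (LinearMap.ker l) Aa)
    (X : Set (Submodule F V))
    (hX : X = A ∪ Aa ∪
      {P : Submodule F V | IsSingularPoint Q P ∧ P ≤ LinearMap.ker l}) :
    ∀ K : Submodule F V, finrank F K = 2 * n + 1 →
      {P ∈ X | P ≤ K}.ncard = (q ^ (2 * n) - 1) / (q - 1) ∨
      {P ∈ X | P ≤ K}.ncard = (q ^ (2 * n) - 1) / (q - 1) - q ^ n := by
  classical
  subst hq
  have hfd : Module.Finite F V := Module.finite_of_finrank_pos (by omega)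
  have hfin : Finite V := Module.finite_of_finite F
  have : Fintype V := Fintype.ofFinite V
  have hch : ringChar F = 2 := FiniteField.even_card_iff_char_two.2 (Nat.even_iff.1 hq2)
  have h2 : (2 : F) = 0 := by
    have := ringChar.Nat.cast_ringChar (R := F)
    rw [hch] at this
    exact_mod_cast this
  have hsq : ∀ a : F, IsSquare a := FiniteField.isSquare_of_char_two hch
  have hnd : NDG Q := ndg_of_nondeg hQnd hQw hV hsq
  have hval : ∀ (c : F) (v : V), (Q + c • QuadraticMap.linMulLin l l) v = Q v + c * (l v * l v) := by
    intro c v; simp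
  have hpol : ∀ (c : F) (v w : V), QuadraticMap.polar (Q + c • QuadraticMap.linMulLin l l) v w
      = QuadraticMap.polar Q v w := by
    intro c v w
    simp only [QuadraticMap.polar, hval, map_add]
    linear_combination (c * l v * l w) * h2
  have hnd' : ∀ c : F, NDG (Q + c • QuadraticMap.linMulLin l l) := by
    intro c v hv
    exact hnd v fun w => by rw [← hpol c]; exact hv w
  have hperp : ∀ (c : F) (U : Submodule F V), perp (Q + c • QuadraticMap.linMulLin l l) U
      = perp Q U := by
    intro c U
    ext v
    simp only [mem_perp, hpol]
  intro K hK
  obtain ⟨φ, hφ0, hφ⟩ := Submodule.exists_le_ker_of_lt_top K (by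
    rw [lt_top_iff_ne_top]
    rintro rfl
    rw [finrank_top] at hK
    omega)
  set p : V := (LinearMap.BilinForm.toDual _ hnd.nd).symm φ with hp
  have hp0 : p ≠ 0 := by
    intro h
    apply hφ0
    rw [hp] at h
    simpa using h
  have hKp : K = perp Q (Submodule.span F {p}) := by
    apply Submodule.eq_of_le_of_finrank_eq
    · intro v hv
      rw [mem_perp_span]
      have := LinearMap.BilinForm.apply_toDual_symm_apply (hB := hnd.nd) φ v
      rw [← hp, QuadraticMap.polarBilin_apply_apply] at this
      rw [this]
      exact hφ hv
    · rw [hK, finrank_perp hnd, hV, finrank_span_singleton hp0]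
      omega
  have cs := hemi_count hn hq2 h2 hsq hWs (hnd' s) hV l A hA hp0 _ _ rfl rfl
  have ct := hemi_count hn hq2 h2 hsq hWt (hnd' t) hV l Aa hAa hp0 _ _ rfl rfl
  rw [hperp, ← hKp] at cs ct
  have hQ0 : ∀ (c : F) (v : V), ((Q + c • QuadraticMap.linMulLin l l) v = 0 ∧ l v = 0) ↔
      (Q v = 0 ∧ l v = 0) := by
    intro c v
    rw [hval]
    constructor
    · rintro ⟨h, h'⟩; rw [h'] at h; exact ⟨by simpa using h, h'⟩
    · rintro ⟨h, h'⟩; rw [h']; exact ⟨by simpa using h, rfl⟩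
  simp only [hQ0] at cs ct
  have hs1 := hA.1.1
  have ht1 := hAa.1.1
  obtain ⟨Y, hY⟩ : ∃ Y : Set (Submodule F V), Y = {P ∈ X | P ≤ K} := ⟨_, rfl⟩
  rw [← hY]
  have hpc := points_count Y (by
    rw [hY]
    rintro P ⟨hP, -⟩
    rw [hX] at hP
    rcases hP with (hP | hP) | hP
    · obtain ⟨⟨v, hv, -, h⟩, -⟩ := hs1 P hP
      exact ⟨v, hv, h⟩
    · obtain ⟨⟨v, hv, -, h⟩, -⟩ := ht1 P hP
      exact ⟨v, hv, h⟩
    · obtain ⟨⟨v, hv, -, h⟩, -⟩ := hP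
      exact ⟨v, hv, h⟩)
  have hsum : ∑ v : V, (if v ≠ 0 ∧ Submodule.span F {v} ∈ Y then (1:ℤ) else 0)
      = sm (fun v => if Submodule.span F {v} ∈ A then 1 else 0) K
      + sm (fun v => if Submodule.span F {v} ∈ Aa then 1 else 0) K
      + sm (fun v => if Q v = 0 ∧ l v = 0 then 1 else 0) K - 1 := by
    have h1 : ∀ a : ℤ, a - 1 = a - ∑ v : V, if v = 0 then 1 else 0 := by simp
    rw [h1]
    unfold sm
    rw [← Finset.sum_add_distrib, ← Finset.sum_add_distrib, ← Finset.sum_sub_distrib]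
    refine Finset.sum_congr rfl fun v _ => ?_
    by_cases hv : v = 0
    · subst hv
      have e1 : Submodule.span F {(0:V)} ∉ A := fun h => (sing_of_mem hs1 h).2 (map_zero l)
      have e2 : Submodule.span F {(0:V)} ∉ Aa := fun h => (sing_of_mem ht1 h).2 (map_zero l)
      simp only [e1, e2]
      simp
    have hm : Submodule.span F {v} ∈ Y ↔
        (Submodule.span F {v} ∈ A ∨ Submodule.span F {v} ∈ Aa ∨ (Q v = 0 ∧ l v = 0)) ∧ v ∈ K := by
      rw [hY, Set.mem_ofPred_eq, Submodule.span_singleton_le_iff_mem, hX, Set.mem_union, Set.mem_union,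
        Set.mem_ofPred_eq, Submodule.span_singleton_le_iff_mem, LinearMap.mem_ker, or_assoc]
      have : IsSingularPoint Q (Submodule.span F {v}) ↔ Q v = 0 := by
        constructor
        · rintro ⟨u, hu, hq, he⟩
          have : v ∈ Submodule.span F {u} := by
            rw [← he]; exact Submodule.mem_span_singleton_self v
          obtain ⟨c, rfl⟩ := Submodule.mem_span_singleton.1 this
          simp [QuadraticMap.map_smul, hq]
        · intro h; exact ⟨v, hv, h, rfl⟩
      rw [this]
    simp only [hm]
    by_cases hvK : v ∈ K
    · by_cases ha : Submodule.span F {v} ∈ A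
      · obtain ⟨a1, a2⟩ := sing_of_mem hs1 ha
        have hna : Submodule.span F {v} ∉ Aa := by
          intro hb
          obtain ⟨b1, -⟩ := sing_of_mem ht1 hb
          rw [hval] at a1 b1
          have : (s - t) * (l v * l v) = 0 := by linear_combination a1 - b1
          rcases mul_eq_zero.1 this with h | h
          · exact hst (sub_eq_zero.1 h)
          · exact a2 (mul_self_eq_zero.1 h)
        simp [hv, hvK, ha, hna, a2]
      · by_cases hb : Submodule.span F {v} ∈ Aa
        · obtain ⟨a1, a2⟩ := sing_of_mem ht1 hb
          simp [hv, hvK, ha, hb, a2]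
        · simp [hv, hvK, ha, hb]
    · simp [hv, hvK]
  rw [hsum] at hpc
  generalize sm (fun v => if Submodule.span F {v} ∈ A then (1:ℤ) else 0) K = α at *
  generalize sm (fun v => if Submodule.span F {v} ∈ Aa then (1:ℤ) else 0) K = β at *
  generalize sm (fun v => if Q v = 0 ∧ l v = 0 then (1:ℤ) else 0) K = γ at *
  generalize Y.ncard = m at *
  obtain ⟨cs1, cs2, cs3⟩ := cs
  obtain ⟨ct1, ct2, ct3⟩ := ct
  have hq1 : 1 < Fintype.card F := Fintype.one_lt_card
  generalize Fintype.card F = q at *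
  have main : ((q:ℤ) - 1) * m = q ^ (2 * n) - 1 ∨
      ((q:ℤ) - 1) * m = q ^ (2 * n) - 1 - (q - 1) * q ^ n := by
    by_cases hlp : l p = 0
    · by_cases hQp : Q p = 0
      · right
        have := cs2 (by rw [hval, hQp, hlp]; simp) hlp
        have := ct2 (by rw [hval, hQp, hlp]; simp) hlp
        linarith
      · left
        have := cs1 (by rw [hval, hlp]; simpa using hQp)
        have := ct1 (by rw [hval, hlp]; simpa using hQp)
        linarith
    · by_cases hps : (Q + s • QuadraticMap.linMulLin l l) p = 0
      · have hpt : (Q + t • QuadraticMap.linMulLin l l) p ≠ 0 := by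
          intro hpt
          rw [hval] at hps hpt
          have : (s - t) * (l p * l p) = 0 := by linear_combination hps - hpt
          rcases mul_eq_zero.1 this with h | h
          · exact hst (sub_eq_zero.1 h)
          · exact hlp (mul_self_eq_zero.1 h)
        have e1 := ct1 hpt
        rcases cs3 hps hlp with e | e
        · left; linarith
        · right; linarith
      · have e1 := cs1 hps
        by_cases hpt : (Q + t • QuadraticMap.linMulLin l l) p = 0
        · rcases ct3 hpt hlp with e | e
          · left; linarith
          · right; linarith
        · have := ct1 hpt
          left; linarith
  obtain ⟨r, rfl⟩ : ∃ r, q = r + 1 := ⟨q - 1, by omega⟩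
  have hr : 0 < r := by omega
  have hpos : 1 ≤ (r + 1) ^ (2 * n) := Nat.one_le_pow _ _ (by omega)
  have hsub : (((r + 1) ^ (2 * n) - 1 : ℕ) : ℤ) = ((r:ℤ) + 1) ^ (2 * n) - 1 := by
    push_cast [Nat.cast_sub hpos]; ring
  have hr1 : r + 1 - 1 = r := by omega
  rw [hr1]
  push_cast at main
  rcases main with h | h
  · left
    have : (r + 1) ^ (2 * n) - 1 = r * m := by
      zify; rw [hsub]; linarith
    rw [this, Nat.mul_div_cancel_left _ hr]
  · right
    have : (r + 1) ^ (2 * n) - 1 = r * (m + (r + 1) ^ n) := by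
      zify; rw [hsub]; linarith
    rw [this, Nat.mul_div_cancel_left _ hr]
    omega
end
end

section
/- Let Λ ≤ H be a 4-dimensional subspace such that the restriction of Q to Λ is nondegenerate of Witt index 1 (so the singular points in Λ form an elliptic quadric Q⁻(3,q)), and let H' ≠ H be another hyperplane of V containing Λ such that the restriction of Q to H' is nondegenerate. Then the set S of singular points contained in H' but not in Λ is a relative q-ovoid of Q⁺(5,q) with respect to 𝒬: every generator of Q⁺(5,q) not contained in H contains exactly q points of S. In particular, for q > 2 there exist proper relative m-ovoids of the hyperbolic quadric Q⁺(5,q) with respect to a parabolic section that are not relative hemisystems (since q ≠ q²/2), so the analogue of the main theorem on relative m-ovoids of elliptic quadrics fails for hyperbolic quadrics. -/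
noncomputable section

open Module

variable {F V : Type*} [Field F] [AddCommGroup V] [Module F V]

/-- The restriction of `Q` to the subspace `U` has Witt index `k`. -/
def HasWittIndexOn (Q : QuadraticForm F V) (U : Submodule F V) (k : ℕ) : Prop :=
  (∀ W : Submodule F V, W ≤ U → TotallySingular Q W → finrank F W ≤ k) ∧
  ∃ W : Submodule F V, W ≤ U ∧ TotallySingular Q W ∧ finrank F W = k


section Helpers

variable {F V : Type*} [Field F] [AddCommGroup V] [Module F V]

/-- The polar complement of a subspace. -/
def perpS (Q : QuadraticForm F V) (U : Submodule F V) : Submodule F V :=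
  LinearMap.ker (Q.polarBilin.domRestrict₂ U)

lemma mem_perpS (Q : QuadraticForm F V) (U : Submodule F V) (v : V) :
    v ∈ perpS Q U ↔ ∀ w ∈ U, QuadraticMap.polar Q v w = 0 := by
  unfold perpS
  rw [LinearMap.mem_ker]
  constructor
  · intro h w hw
    have := congrArg (fun f => f ⟨w, hw⟩) h
    exact this
  · intro h
    ext ⟨w, hw⟩
    exact h w hw

lemma finrank_perpS [FiniteDimensional F V] (Q : QuadraticForm F V) (U : Submodule F V) :
    finrank F V ≤ finrank F (perpS Q U) + finrank F U := by
  have h1 := LinearMap.finrank_range_add_finrank_ker (Q.polarBilin.domRestrict₂ U)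
  have h2 := Submodule.finrank_le (LinearMap.range (Q.polarBilin.domRestrict₂ U))
  have h3 : finrank F (U →ₗ[F] F) = finrank F U := Subspace.dual_finrank_eq
  unfold perpS
  omega

lemma inf_lower [FiniteDimensional F V] {A B C : Submodule F V} (hA : A ≤ C) (hB : B ≤ C) :
    finrank F A + finrank F B ≤ finrank F (A ⊓ B : Submodule F V) + finrank F C := by
  have h1 := Submodule.finrank_sup_add_finrank_inf_eq A B
  have h2 := Submodule.finrank_mono (sup_le hA hB)
  omega

/-- adding a vector: complement description -/
lemma sup_span_eq [FiniteDimensional F V] {A C : Submodule F V} (hA : A ≤ C)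
    (hd : finrank F C = finrank F A + 1) {w : V} (hw : w ∈ C) (hwA : w ∉ A) :
    ∀ v ∈ C, ∃ x ∈ A, ∃ t : F, v = x + t • w := by
  have hle : A ⊔ F ∙ w ≤ C :=
    sup_le hA ((Submodule.span_singleton_le_iff_mem _ _).2 hw)
  have hlt : A < A ⊔ F ∙ w := by
    refine lt_of_le_of_ne le_sup_left ?_
    intro h
    apply hwA
    rw [h]
    exact Submodule.mem_sup_right (Submodule.mem_span_singleton_self w)
  have h2 := Submodule.finrank_lt_finrank_of_lt hlt
  have heq : A ⊔ F ∙ w = C := Submodule.eq_of_le_of_finrank_le hle (by omega)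
  intro v hv
  rw [← heq] at hv
  obtain ⟨x, hx, y, hy, rfl⟩ := Submodule.mem_sup.1 hv
  obtain ⟨t, rfl⟩ := Submodule.mem_span_singleton.1 hy
  exact ⟨x, hx, t, rfl⟩

lemma span_smul_eq' {v : V} {c : F} (hc : c ≠ 0) :
    Submodule.span F {c • v} = Submodule.span F {v} :=
  Submodule.span_singleton_smul_eq (IsUnit.mk0 c hc) v

/-- `q` points on a line minus a point. -/
lemma line_count [Fintype F] [FiniteDimensional F V] (Q : QuadraticForm F V)
    (g H' L : Submodule F V) (hg : TotallySingular Q g)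
    (h2 : finrank F (g ⊓ H' : Submodule F V) = 2) (hLH : L ≤ H')
    (h1 : finrank F (g ⊓ L : Submodule F V) = 1) :
    {P ∈ {P : Submodule F V | IsSingularPoint Q P ∧ P ≤ H' ∧ ¬ P ≤ L} | P ≤ g}.ncard
      = Fintype.card F := by
  obtain ⟨⟨u, hu⟩, hu0, hspan⟩ := finrank_eq_one_iff'.1 h1
  have hu0' : u ≠ 0 := fun h => hu0 (by ext; exact h)
  have hle : g ⊓ L ≤ g ⊓ H' := inf_le_inf_left _ hLH
  obtain ⟨w, hw, hwL⟩ : ∃ w ∈ g ⊓ H', w ∉ g ⊓ L := by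
    by_contra! hcon
    have := Submodule.finrank_mono (show g ⊓ H' ≤ g ⊓ L from hcon)
    omega
  have hwL' : w ∉ L := fun h => hwL ⟨hw.1, h⟩
  have hdec := sup_span_eq hle (by omega) hw hwL
  have himg : {P ∈ {P : Submodule F V | IsSingularPoint Q P ∧ P ≤ H' ∧ ¬ P ≤ L} | P ≤ g}
      = (fun a : F => Submodule.span F {w + a • u}) '' Set.univ := by
    ext P
    simp only [Set.mem_ofPred_eq, Set.mem_image, Set.mem_univ, true_and]
    constructor
    · rintro ⟨⟨⟨v, hv0, hQv, rfl⟩, hvH, hvL⟩, hvg⟩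
      rw [Submodule.span_singleton_le_iff_mem] at hvH hvL hvg
      obtain ⟨x, hx, t, rfl⟩ := hdec v ⟨hvg, hvH⟩
      obtain ⟨a, ha⟩ := hspan ⟨x, hx⟩
      have ha' : a • u = x := congrArg Subtype.val ha
      have ht : t ≠ 0 := by
        rintro rfl
        apply hvL
        simpa using hx.2
      refine ⟨t⁻¹ * a, ?_⟩
      rw [← span_smul_eq' ht]
      congr 2
      rw [smul_add, smul_smul, ← mul_assoc, mul_inv_cancel₀ ht, one_mul, ha', add_comm]
    · rintro ⟨a, rfl⟩
      have hm : w + a • u ∈ g := g.add_mem hw.1 (g.smul_mem _ hu.1)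
      have hn : w + a • u ∉ L := by
        intro h
        exact hwL' ((Submodule.add_mem_iff_left _ (L.smul_mem a hu.2)).1 h)
      simp only [Submodule.span_singleton_le_iff_mem]
      refine ⟨⟨⟨_, ?_, hg _ hm, rfl⟩, H'.add_mem hw.2 (H'.smul_mem _ (hLH hu.2)), hn⟩, hm⟩
      intro h
      exact hn (h ▸ L.zero_mem)
  rw [himg, Set.ncard_image_of_injective, Set.ncard_univ, Nat.card_eq_fintype_card]
  intro a b hab
  simp only at hab
  have hmem : w + a • u ∈ Submodule.span F {w + b • u} :=
    hab ▸ Submodule.mem_span_singleton_self _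
  obtain ⟨c, hc⟩ := Submodule.mem_span_singleton.1 hmem
  have h3 : (c - 1) • w = (a - c * b) • u := by
    have : c • w + (c * b) • u = w + a • u := by rw [← hc, smul_add, smul_smul]
    rw [sub_smul, sub_smul, one_smul, sub_eq_sub_iff_add_eq_add, this, add_comm]
  have hc1 : c = 1 := by
    by_contra hne
    apply hwL'
    have : c - 1 ≠ 0 := sub_ne_zero.2 hne
    rw [← Submodule.smul_mem_iff L this, h3]
    exact L.smul_mem _ hu.2
  subst hc1
  simp only [sub_self, zero_smul, one_mul] at h3
  rcases smul_eq_zero.1 h3.symm with h | h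
  · exact sub_eq_zero.1 h
  · exact absurd h hu0'

lemma polar_ts (Q : QuadraticForm F V) {g : Submodule F V} (hg : TotallySingular Q g)
    {x y : V} (hx : x ∈ g) (hy : y ∈ g) : QuadraticMap.polar Q x y = 0 := by
  simp [QuadraticMap.polar, hg _ hx, hg _ hy, hg _ (g.add_mem hx hy)]

lemma Q_add (Q : QuadraticForm F V) (x y : V) :
    Q (x + y) = Q x + Q y + QuadraticMap.polar Q x y := by
  simp [QuadraticMap.polar]

/-- no singular vectors in the perp of an elliptic solid -/
lemma perp_aniso [FiniteDimensional F V] (hV : finrank F V = 6)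
    (Q : QuadraticForm F V) (hQnd : Nondeg Q) (hQw : HasWittIndex Q 3)
    (L : Submodule F V) (hL : finrank F L = 4) (hLw : HasWittIndexOn Q L 1)
    (p : V) (hp : p ∈ perpS Q L) (hQp : Q p = 0) : p = 0 := by
  by_contra hp0
  rw [mem_perpS] at hp
  have hex : ∃ w, QuadraticMap.polar Q p w ≠ 0 := by
    by_contra! h
    exact hp0 (hQnd p hQp h)
  obtain ⟨w, hw⟩ := hex
  set K := perpS Q (F ∙ p) with hK
  have hsym : ∀ x y, QuadraticMap.polar Q x y = QuadraticMap.polar Q y x :=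
    fun x y => QuadraticMap.polar_comm Q x y
  have memK : ∀ v, v ∈ K ↔ QuadraticMap.polar Q v p = 0 := by
    intro v
    rw [hK, mem_perpS]
    constructor
    · intro h; exact h p (Submodule.mem_span_singleton_self p)
    · intro h z hz
      obtain ⟨c, rfl⟩ := Submodule.mem_span_singleton.1 hz
      rw [QuadraticMap.polar_smul_right, h, smul_zero]
  have hK5 : finrank F K = 5 := by
    have h1 := finrank_perpS Q (F ∙ p)
    rw [finrank_span_singleton hp0, ← hK] at h1
    have h2 : K < ⊤ := by
      rw [lt_top_iff_ne_top]
      intro h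
      apply hw
      rw [hsym, ← memK, h]; trivial
    have h3 := Submodule.finrank_lt h2.ne
    omega
  have hpK : p ∈ K := by
    rw [memK]
    exact polar_ts Q (g := F ∙ p) (by
      intro v hv
      obtain ⟨c, rfl⟩ := Submodule.mem_span_singleton.1 hv
      rw [QuadraticMap.map_smul, hQp, smul_zero]) (Submodule.mem_span_singleton_self p)
        (Submodule.mem_span_singleton_self p)
  have hLK : L ≤ K := fun v hv => by rw [memK, hsym]; exact hp v hv
  obtain ⟨g, hg, hg3⟩ := hQw.2
  set W := (g ⊓ K) ⊔ F ∙ p with hW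
  have hWK : W ≤ K := sup_le inf_le_right ((Submodule.span_singleton_le_iff_mem _ _).2 hpK)
  have hWts : TotallySingular Q W := by
    intro v hv
    obtain ⟨x, hx, y, hy, rfl⟩ := Submodule.mem_sup.1 hv
    obtain ⟨c, rfl⟩ := Submodule.mem_span_singleton.1 hy
    rw [Q_add, hg x hx.1, QuadraticMap.map_smul, hQp, QuadraticMap.polar_smul_right,
      (memK x).1 hx.2]
    simp
  have hW3 : 3 ≤ finrank F W := by
    by_cases hpg : p ∈ g
    · have : g ≤ W := by
        intro v hv
        refine Submodule.mem_sup_left ⟨hv, (memK v).2 (polar_ts Q hg hv hpg)⟩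
      have := Submodule.finrank_mono this
      omega
    · have hlt : g ⊓ K < W := by
        refine lt_of_le_of_ne le_sup_left ?_
        intro h
        apply hpg
        have : p ∈ W := Submodule.mem_sup_right (Submodule.mem_span_singleton_self p)
        rw [← h] at this
        exact this.1
      have h1 := Submodule.finrank_lt_finrank_of_lt hlt
      have h2 := inf_lower (le_top : g ≤ ⊤) (le_top : K ≤ ⊤)
      rw [finrank_top] at h2
      omega
  have h4 := inf_lower hWK hLK
  have h5 := hLw.1 (W ⊓ L) inf_le_right (fun v hv => hWts v hv.1)
  omega

/-- parity: the polar radical of a nondegenerate 4-space vanishes -/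
lemma rad_zero [Fintype F] [CharP F 2] [FiniteDimensional F V]
    (Q : QuadraticForm F V) (L : Submodule F V) (hL : finrank F L = 4)
    (hLnd : NondegOn Q L) (r : V) (hr : r ∈ L) (hrp : r ∈ perpS Q L) : r = 0 := by
  by_contra hr0
  have hsym : ∀ x y, QuadraticMap.polar Q x y = QuadraticMap.polar Q y x :=
    fun x y => QuadraticMap.polar_comm Q x y
  have halt : ∀ x, QuadraticMap.polar Q x x = 0 := by
    intro x
    rw [QuadraticMap.polar_self, two_smul]
    exact CharTwo.add_self_eq_zero _
  have hQr : Q r ≠ 0 := fun h => hr0 (hLnd r hr h ((mem_perpS Q L r).1 hrp))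
  have hone : ∀ v ∈ L, v ∈ perpS Q L → v ∈ F ∙ r := by
    intro v hv hvp
    obtain ⟨a, ha⟩ := FiniteField.isSquare_of_char_two (ringChar.eq F 2) (Q v / Q r)
    have h0 : v + a • r = 0 := by
      apply hLnd _ (L.add_mem hv (L.smul_mem _ hr))
      · rw [Q_add, QuadraticMap.map_smul, QuadraticMap.polar_smul_right,
          (mem_perpS Q L v).1 hvp r hr, ← ha, smul_zero, add_zero, smul_eq_mul,
          div_mul_cancel₀ _ hQr]
        exact CharTwo.add_self_eq_zero _
      · exact (mem_perpS Q L _).1 ((perpS Q L).add_mem hvp ((perpS Q L).smul_mem _ hrp))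
    rw [add_eq_zero_iff_eq_neg] at h0
    rw [h0]
    exact Submodule.neg_mem _ (Submodule.smul_mem _ _ (Submodule.mem_span_singleton_self r))
  -- tower of subspaces
  have ext : ∀ A : Submodule F V, A ≤ L → finrank F A < 4 → ∃ w ∈ L, w ∉ A := by
    intro A hA h
    by_contra! hcon
    have := Submodule.finrank_mono (show L ≤ A from hcon)
    omega
  have big : ∀ (A : Submodule F V) (w : V), w ∉ A →
      finrank F A + 1 ≤ finrank F (A ⊔ F ∙ w : Submodule F V) ∧
      finrank F (A ⊔ F ∙ w : Submodule F V) ≤ finrank F A + 1 := by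
    intro A w hw
    constructor
    · apply Submodule.finrank_lt_finrank_of_lt
      refine lt_of_le_of_ne le_sup_left ?_
      intro h
      apply hw
      rw [h]
      exact Submodule.mem_sup_right (Submodule.mem_span_singleton_self w)
    · have h1 := Submodule.finrank_add_le_finrank_add_finrank A (F ∙ w)
      have h2 : finrank F (F ∙ w) ≤ 1 := by
        simpa using finrank_span_le_card (R := F) ({w} : Set V)
      omega
  have sub : ∀ (A : Submodule F V) (w : V), A ≤ L → w ∈ L → A ⊔ F ∙ w ≤ L :=
    fun A w hA hw => sup_le hA ((Submodule.span_singleton_le_iff_mem _ _).2 hw)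
  have self : ∀ (A : Submodule F V) (w : V), w ∈ A ⊔ F ∙ w :=
    fun A w => Submodule.mem_sup_right (Submodule.mem_span_singleton_self w)
  set A1 := F ∙ r with hA1
  have hA1L : A1 ≤ L := (Submodule.span_singleton_le_iff_mem _ _).2 hr
  have d1 : finrank F A1 = 1 := finrank_span_singleton hr0
  obtain ⟨u, hu, huA⟩ := ext A1 hA1L (by omega)
  have d2 := big A1 u huA
  set A2 := A1 ⊔ F ∙ u with hA2
  have hA2L : A2 ≤ L := sub _ _ hA1L hu
  obtain ⟨v, hv, hvA⟩ := ext A2 hA2L (by omega)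
  have d3 := big A2 v hvA
  set A3 := A2 ⊔ F ∙ v with hA3
  have hA3L : A3 ≤ L := sub _ _ hA2L hv
  obtain ⟨w, hw, hwA⟩ := ext A3 hA3L (by omega)
  have d4 := big A3 w hwA
  have e3 := sup_span_eq hA3L (by omega) hw hwA
  have e2 := sup_span_eq (A := A2) (C := A3) le_sup_left (by omega) (self _ v) hvA
  have e1 := sup_span_eq (A := A1) (C := A2) le_sup_left (by omega) (self _ u) huA
  have key : ∀ z, QuadraticMap.polar Q z u = 0 → QuadraticMap.polar Q z v = 0 →
      QuadraticMap.polar Q z w = 0 → z ∈ L → z ∈ perpS Q L := by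
    intro z h1 h2 h3 hz
    rw [mem_perpS]
    intro y hy
    obtain ⟨y1, hy1, t1, rfl⟩ := e3 y hy
    obtain ⟨y2, hy2, t2, rfl⟩ := e2 y1 hy1
    obtain ⟨y3, hy3, t3, rfl⟩ := e1 y2 hy2
    obtain ⟨t4, rfl⟩ := Submodule.mem_span_singleton.1 hy3
    simp [QuadraticMap.polar_add_right, QuadraticMap.polar_smul_right, h1, h2, h3,
      hsym z r, (mem_perpS Q L r).1 hrp z hz]
  have cc : ∀ a : F, a + a = 0 := fun a => CharTwo.add_self_eq_zero a
  set a := QuadraticMap.polar Q v w with ha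
  set b := QuadraticMap.polar Q u w with hb
  set c := QuadraticMap.polar Q u v with hc
  have hzL : a • u + b • v + c • w ∈ L :=
    L.add_mem (L.add_mem (L.smul_mem _ hu) (L.smul_mem _ hv)) (L.smul_mem _ hw)
  have hz : a • u + b • v + c • w ∈ A1 := by
    apply hone _ hzL
    apply key _ _ _ _ hzL
    · simp only [QuadraticMap.polar_add_left, QuadraticMap.polar_smul_left, halt, hsym v u,
        hsym w u, ← hb, ← hc, smul_eq_mul]
      linear_combination cc (b * c)
    · simp only [QuadraticMap.polar_add_left, QuadraticMap.polar_smul_left, halt,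
        hsym w v, ← ha, ← hc, smul_eq_mul]
      linear_combination cc (a * c)
    · simp only [QuadraticMap.polar_add_left, QuadraticMap.polar_smul_left, halt,
        ← ha, ← hb, smul_eq_mul]
      linear_combination cc (a * b)
  have hA12 : A1 ≤ A2 := le_sup_left
  have hA23 : A2 ≤ A3 := le_sup_left
  have c0 : c = 0 := by
    by_contra h
    apply hwA
    rw [← Submodule.smul_mem_iff A3 h]
    have h1 : a • u + b • v ∈ A3 :=
      A3.add_mem (A3.smul_mem _ (hA23 (self _ u))) (A3.smul_mem _ (self _ v))
    exact (Submodule.add_mem_iff_right _ h1).1 (hA23 (hA12 hz))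
  rw [c0, zero_smul, add_zero] at hz
  have b0 : b = 0 := by
    by_contra h
    apply hvA
    rw [← Submodule.smul_mem_iff A2 h]
    have h1 : a • u ∈ A2 := A2.smul_mem _ (self _ u)
    exact (Submodule.add_mem_iff_right _ h1).1 (hA12 hz)
  apply huA
  apply hone u hu
  exact key u (halt u) c0 b0 hu

end Helpers

/-- On the hyperbolic quadric `Q⁺(5,q)`, `q` even: if `Λ` cuts `𝒬 = Q ∩ H` in an
elliptic quadric `Q⁻(3,q)` and `H' ≠ H` is another nondegenerate hyperplane through
`Λ`, then the singular points in `H' \ Λ` form a relative `q`-ovoid of `Q⁺(5,q)` with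
respect to `𝒬`; for `q > 2` it is not a relative hemisystem, so the analogue of the
main theorem on relative `m`-ovoids of elliptic quadrics fails for hyperbolic quadrics. -/
theorem statement_17
    (q : ℕ) [Fintype F] (hq : Fintype.card F = q) (hq2 : Even q)
    (hV : finrank F V = 6)
    (Q : QuadraticForm F V) (hQnd : Nondeg Q) (hQw : HasWittIndex Q 3)
    (H : Submodule F V) (hH : finrank F H = 5) (hHnd : NondegOn Q H)
    (Λ : Submodule F V) (hΛH : Λ ≤ H) (hΛdim : finrank F Λ = 4)
    (hΛnd : NondegOn Q Λ) (hΛw : HasWittIndexOn Q Λ 1)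
    (H' : Submodule F V) (hne : H' ≠ H) (hΛH' : Λ ≤ H')
    (hH'dim : finrank F H' = 5) (hH'nd : NondegOn Q H')
    (S : Set (Submodule F V))
    (hS : S = {P : Submodule F V | IsSingularPoint Q P ∧ P ≤ H' ∧ ¬ P ≤ Λ}) :
    IsRelativeMOvoid Q 3 H q S ∧
    (2 < q →
      S.ncard ≠ {P : Submodule F V | IsSingularPoint Q P ∧ ¬ P ≤ H ∧ P ∉ S}.ncard) := by
  have hfd : FiniteDimensional F V := Module.finite_of_finrank_pos (by omega)
  have hfin : Finite V := Module.finite_of_finite F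
  have hchar : CharP F 2 := by
    have h1 : ringChar F = 2 := by
      by_contra h
      have := FiniteField.odd_card_of_char_ne_two h
      rw [hq] at this
      rcases hq2 with ⟨k, hk⟩
      omega
    exact h1 ▸ ringChar.charP F
  have hinf : H' ⊓ H = Λ := by
    symm
    apply Submodule.eq_of_le_of_finrank_le (le_inf hΛH' hΛH)
    have hlt : H' ⊓ H < H' := by
      refine lt_of_le_of_ne inf_le_left ?_
      intro h
      exact hne (Submodule.eq_of_le_of_finrank_le (inf_eq_left.1 h) (by omega))
    have := Submodule.finrank_lt_finrank_of_lt hlt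
    omega
  have hmemΛ : ∀ v, v ∈ H' → v ∈ H → v ∈ Λ := fun v h1 h2 => hinf ▸ ⟨h1, h2⟩
  have hov : ∀ g : Submodule F V, IsGenerator Q 3 g → {P ∈ S | P ≤ g}.ncard = q := by
    rintro g ⟨hg, hg3⟩
    have h1 := inf_lower (le_top : g ≤ ⊤) (le_top : Λ ≤ ⊤)
    have h2 := inf_lower (le_top : g ≤ ⊤) (le_top : H' ≤ ⊤)
    rw [finrank_top] at h1 h2
    have h3 := hΛw.1 (g ⊓ Λ) inf_le_right (fun v hv => hg v hv.1)
    have h4 := inf_lower (inf_le_right : g ⊓ H' ≤ H') hΛH'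
    have h5 := Submodule.finrank_mono (inf_le_inf_right Λ (inf_le_left : g ⊓ H' ≤ g))
    rw [hS, ← hq]
    exact line_count Q g H' Λ hg (by omega) hΛH' (by omega)
  refine ⟨⟨?_, fun g hg _ => hov g hg⟩, ?_⟩
  · intro P hP
    rw [hS] at hP
    exact ⟨hP.1, fun h => hP.2.2 (hinf ▸ le_inf hP.2.1 h)⟩
  intro hq3
  -- the set `S` is nonempty
  have hSne : 0 < S.ncard := by
    obtain ⟨g, hg, hg3⟩ := hQw.2
    have h1 := hov g ⟨hg, hg3⟩
    have h2 : {P ∈ S | P ≤ g}.ncard ≤ S.ncard :=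
      Set.ncard_le_ncard (fun P hP => hP.1) (Set.toFinite _)
    omega
  have han := perp_aniso hV Q hQnd hQw Λ hΛdim hΛw
  have hrad := rad_zero Q Λ hΛdim hΛnd
  have hperp := finrank_perpS Q Λ
  have hexp : ∀ K : Submodule F V, finrank F K = 5 → ∃ p ∈ K, p ∈ perpS Q Λ ∧ p ≠ 0 := by
    intro K hK
    have h1 := inf_lower (le_top : K ≤ ⊤) (le_top : perpS Q Λ ≤ ⊤)
    rw [finrank_top] at h1
    have h2 : K ⊓ perpS Q Λ ≠ ⊥ := by
      intro h
      rw [h, finrank_bot] at h1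
      omega
    obtain ⟨p, hp, hp0⟩ := Submodule.exists_mem_ne_zero_of_ne_bot h2
    exact ⟨p, hp.1, hp.2, hp0⟩
  obtain ⟨p, hpH', hpp, hp0⟩ := hexp H' hH'dim
  obtain ⟨h, hhH, hhp, hh0⟩ := hexp H hH
  have hpΛ : p ∉ Λ := fun hc => hp0 (hrad p hc hpp)
  have hhΛ : h ∉ Λ := fun hc => hh0 (hrad h hc hhp)
  have hpH : p ∉ H := fun hc => hpΛ (hmemΛ p hpH' hc)
  have hhH' : h ∉ H' := fun hc => hhΛ (hmemΛ h hc hhH)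
  have hQp : Q p ≠ 0 := fun hc => hp0 (han p hpp hc)
  classical
  obtain ⟨t, ht0, ht1⟩ : ∃ t : F, t ≠ 0 ∧ t ≠ 1 := by
    by_contra! hcon
    have : (Finset.univ : Finset F) ⊆ {0, 1} := by
      intro x _
      by_cases hx : x = 0
      · simp [hx]
      · simp [hcon x hx]
    have h1 := Finset.card_le_card this
    rw [Finset.card_univ, hq] at h1
    have h2 : Finset.card ({0, 1} : Finset F) ≤ 2 := Finset.card_le_two
    omega
  set A : Set V := {x | x ∈ Λ ∧ Q x = Q p} with hA
  -- scalars
  have hscal : ∀ s : F, s ≠ 0 → ∃ l : F, l ≠ 0 ∧ l * l * Q p = Q (p + s • h) := by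
    intro s hs
    obtain ⟨l, hl⟩ := FiniteField.isSquare_of_char_two (ringChar.eq F 2)
      (Q (p + s • h) / Q p)
    have hne0 : Q (p + s • h) ≠ 0 := by
      intro hc
      have h0 := han _ ((perpS Q Λ).add_mem hpp ((perpS Q Λ).smul_mem s hhp)) hc
      apply hpH
      rw [add_eq_zero_iff_eq_neg.1 h0]
      exact H.neg_mem (H.smul_mem _ hhH)
    have hl2 : l * l * Q p = Q (p + s • h) := by rw [← hl, div_mul_cancel₀ _ hQp]
    refine ⟨l, ?_, hl2⟩
    rintro rfl
    apply hne0
    rw [← hl2]; simp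
  have cc : ∀ a : F, a + a = 0 := fun a => CharTwo.add_self_eq_zero a
  -- key comparison
  have hcmp : ∀ (x y : V) (s s' : F), x ∈ Λ → y ∈ Λ →
      Submodule.span F {x + (p + s • h)} = Submodule.span F {y + (p + s' • h)} →
      x = y ∧ s = s' := by
    intro x y s s' hx hy he
    have hmem : x + (p + s • h) ∈ Submodule.span F {y + (p + s' • h)} :=
      he ▸ Submodule.mem_span_singleton_self _
    obtain ⟨c, hc⟩ := Submodule.mem_span_singleton.1 hmem
    have e1 : c • y - x = (1 - c) • p + (s - c * s') • h := by
      have : c • y + (c • p + (c * s') • h) = x + (p + s • h) := by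
        rw [← hc, smul_add, smul_add, smul_smul]
      have h2 : c • y = x + (p + s • h) - (c • p + (c * s') • h) := by
        rw [← this]; abel
      rw [h2, sub_smul, sub_smul, one_smul]
      abel
    have e2 : c • y - x = 0 := by
      apply hrad _ (Λ.sub_mem (Λ.smul_mem _ hy) hx)
      rw [e1]
      exact (perpS Q Λ).add_mem ((perpS Q Λ).smul_mem _ hpp) ((perpS Q Λ).smul_mem _ hhp)
    rw [e2] at e1
    have c1 : c = 1 := by
      by_contra hc1
      apply hpH
      have : (1 - c) ≠ 0 := sub_ne_zero.2 (Ne.symm hc1)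
      rw [← Submodule.smul_mem_iff H this, add_eq_zero_iff_eq_neg.1 e1.symm]
      exact H.neg_mem (H.smul_mem _ hhH)
    subst c1
    simp only [sub_self, zero_smul, zero_add, one_mul] at e1
    rw [one_smul] at e2
    refine ⟨(sub_eq_zero.1 e2).symm, ?_⟩
    rcases smul_eq_zero.1 e1.symm with h' | h'
    · exact sub_eq_zero.1 h'
    · exact absurd h' hh0
  obtain ⟨l1, hl1, hl1e⟩ := hscal 1 one_ne_zero
  obtain ⟨l2, hl2, hl2e⟩ := hscal t ht0
  set T := {P : Submodule F V | IsSingularPoint Q P ∧ ¬ P ≤ H ∧ P ∉ S} with hT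
  set f : F → F → V → Submodule F V := fun l s x => Submodule.span F {l • x + (p + s • h)} with hf
  have hfT : ∀ l s, s ≠ 0 → l * l * Q p = Q (p + s • h) → f l s '' A ⊆ T := by
    rintro l s hs hl _ ⟨x, ⟨hx, hxQ⟩, rfl⟩
    have hnH : l • x + (p + s • h) ∉ H := by
      intro hc
      rw [Submodule.add_mem_iff_right _ (H.smul_mem l (hΛH hx)),
        Submodule.add_mem_iff_left _ (H.smul_mem s hhH)] at hc
      exact hpH hc
    have hnH' : l • x + (p + s • h) ∉ H' := by
      intro hc
      rw [Submodule.add_mem_iff_right _ (H'.smul_mem l (hΛH' hx)),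
        Submodule.add_mem_iff_right _ hpH', Submodule.smul_mem_iff H' hs] at hc
      exact hhH' hc
    refine ⟨⟨_, ?_, ?_, rfl⟩, ?_, ?_⟩
    · intro hc
      exact hnH (hc ▸ H.zero_mem)
    · have hpol : QuadraticMap.polar Q (l • x) (p + s • h) = 0 := by
        rw [QuadraticMap.polar_comm]
        exact (mem_perpS Q Λ _).1
          ((perpS Q Λ).add_mem hpp ((perpS Q Λ).smul_mem s hhp)) _ (Λ.smul_mem l hx)
      rw [Q_add, hpol, QuadraticMap.map_smul, hxQ, ← hl, smul_eq_mul, add_zero]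
      exact cc _
    · rw [hf, Submodule.span_singleton_le_iff_mem]; exact hnH
    · rw [hS]
      intro hc
      exact hnH' ((Submodule.span_singleton_le_iff_mem _ _).1 hc.2.1)
  have hinj : ∀ l s, l ≠ 0 → Set.InjOn (f l s) A := by
    intro l s hl x hx y hy he
    have := (hcmp _ _ s s (Λ.smul_mem l hx.1) (Λ.smul_mem l hy.1) he).1
    exact smul_right_injective V hl this
  have hdisj : Disjoint (f l1 1 '' A) (f l2 t '' A) := by
    rw [Set.disjoint_left]
    rintro _ ⟨x, hx, rfl⟩ ⟨y, hy, he⟩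
    exact ht1 (hcmp _ _ _ _ (Λ.smul_mem l2 hy.1) (Λ.smul_mem l1 hx.1) he).2
  have hSA : S ⊆ (fun x => Submodule.span F {x + p}) '' A := by
    intro P hP
    rw [hS] at hP
    obtain ⟨⟨v, hv0, hQv, rfl⟩, hvH, hvL⟩ := hP
    rw [Submodule.span_singleton_le_iff_mem] at hvH hvL
    obtain ⟨x, hx, c, rfl⟩ := sup_span_eq hΛH' (by omega) hpH' hpΛ v hvH
    have hc0 : c ≠ 0 := by
      rintro rfl
      apply hvL
      simpa using hx
    have hpol : QuadraticMap.polar Q x (c • p) = 0 := by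
      rw [QuadraticMap.polar_comm]
      exact (mem_perpS Q Λ _).1 ((perpS Q Λ).smul_mem c hpp) _ hx
    rw [Q_add, hpol, QuadraticMap.map_smul, add_zero, smul_eq_mul] at hQv
    refine ⟨c⁻¹ • x, ⟨Λ.smul_mem _ hx, ?_⟩, ?_⟩
    · have hQx : Q x = c * c * Q p := by linear_combination hQv - cc (c * c * Q p)
      rw [QuadraticMap.map_smul, hQx, smul_eq_mul]
      field_simp
    · simp only
      rw [← span_smul_eq' hc0, smul_add, smul_smul, mul_inv_cancel₀ hc0, one_smul]
  have n1 : S.ncard ≤ A.ncard :=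
    (Set.ncard_le_ncard hSA (Set.toFinite _)).trans (Set.ncard_image_le (Set.toFinite _))
  have n2 : (f l1 1 '' A ∪ f l2 t '' A).ncard ≤ T.ncard :=
    Set.ncard_le_ncard (Set.union_subset (hfT _ _ one_ne_zero hl1e) (hfT _ _ ht0 hl2e))
      (Set.toFinite _)
  rw [Set.ncard_union_eq hdisj (Set.toFinite _) (Set.toFinite _),
    Set.InjOn.ncard_image (hinj _ _ hl1), Set.InjOn.ncard_image (hinj _ _ hl2)] at n2
  omega
end
end
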